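/- For every α ∈ (0,1), every nonuniform time mesh, and all indices k ≥ 3 and 1 ≤ j ≤ k−2, the L2-1_σ coefficients satisfy a_{j+1}^k − a_j^k < a_{j+1}^{k+1} − a_j^{k+1}. -/

import Mathlib

open MeasureTheory Real Finset

noncomputable section

/-- Time step `τ_j = t_j - t_{j-1}`. -/
def tau (t : ℕ → ℝ) (j : ℕ) : ℝ := t j - t (j - 1)

/-- Step ratio `ρ_j = τ_j / τ_{j-1}`. -/
def rho (t : ℕ → ℝ) (j : ℕ) : ℝ := tau t j / tau t (j - 1)

/-- Offset node `t_k^* = t_{k-1} + σ τ_k` with `σ = 1 - α/2`. -/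
def tstar (α : ℝ) (t : ℕ → ℝ) (k : ℕ) : ℝ := t (k - 1) + (1 - α / 2) * tau t k

/-- L2-1_σ coefficient `a_j^k`. -/
def acoef (α : ℝ) (t : ℕ → ℝ) (j k : ℕ) : ℝ :=
  ∫ θ in (0:ℝ)..1,
    (-2 * tau t j * (1 - θ) - tau t (j + 1)) /
      ((tau t j + tau t (j + 1)) * (tstar α t k - (t (j - 1) + θ * tau t j)) ^ α)

/-- L2-1_σ coefficient `c_j^k`. -/
def ccoef (α : ℝ) (t : ℕ → ℝ) (j k : ℕ) : ℝ :=
  ∫ θ in (0:ℝ)..1,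
    (tau t j ^ 2 * (2 * θ - 1)) /
      (tau t (j + 1) * (tau t j + tau t (j + 1)) *
        (tstar α t k - (t (j - 1) + θ * tau t j)) ^ α)

/-- `d_j^k = c_{j-1}^k - a_j^k`. -/
def dcoef (α : ℝ) (t : ℕ → ℝ) (j k : ℕ) : ℝ := ccoef α t (j - 1) k - acoef α t j k

/-- The lower-triangular L2-1_σ matrix `M` (entries vanish above the diagonal and
for column index `0`). -/
def Mentry (α : ℝ) (t : ℕ → ℝ) (k j : ℕ) : ℝ :=
  if j = 0 ∨ k < j then 0
  else if j = k then ccoef α t (k - 1) k + (1 - α / 2) ^ (1 - α) / ((1 - α) * tau t k ^ α)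
  else if j = 1 then -acoef α t 1 k
  else dcoef α t j k

end

/-!
Write `t_k^*` for `tstar α t k`. The coefficient `-a_j^k` is the average of the kernel
`s ↦ (t_k^* - s) ^ (-α)` over `[t_{j-1}, t_j]` with respect to a positive density that depends on
`j` but not on `k`. Hence, for `k < l`, the difference `a_j^l - a_j^k` is the average of
`g s = (t_k^* - s) ^ (-α) - (t_l^* - s) ^ (-α)`. Strict convexity of `x ↦ x ^ (-α)` makes `g`
strictly increasing, so this average lies strictly between `g t_{j-1}` and `g t_j`. The averages
for `j` and `j + 1` are therefore separated by `g t_j`.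
-/

lemma increment_lt_of_strictConvexOn {𝕜 : Type*} [Field 𝕜] [LinearOrder 𝕜] [IsStrictOrderedRing 𝕜]
    {s : Set 𝕜} {f : 𝕜 → 𝕜} (hf : StrictConvexOn 𝕜 s f) {x y h : 𝕜} (hx : x ∈ s)
    (hyh : y + h ∈ s) (hxy : x < y) (hh : 0 < h) : f (x + h) - f x < f (y + h) - f y := by
  have hxh := hf.secant_strict_mono_aux1 hx hyh (y := x + h) (by linarith) (by linarith)
  have hy := hf.secant_strict_mono_aux1 hx hyh hxy (by linarith)
  have hpos : 0 < y + h - x := by linarith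
  refine lt_of_mul_lt_mul_left ?_ hpos.le
  linear_combination hxh + hy

lemma strictConvexOn_rpow_of_neg {p : ℝ} (hp : p < 0) :
    StrictConvexOn ℝ (Set.Ioi 0) fun x : ℝ ↦ x ^ p := by
  refine StrictMonoOn.strictConvexOn_of_deriv (convex_Ioi 0)
    (continuousOn_id.rpow_const fun x hx ↦ Or.inl (ne_of_gt hx)) ?_
  rw [interior_Ioi, Real.deriv_rpow_const']
  intro x hx y _ hxy
  exact mul_lt_mul_of_neg_left (Real.rpow_lt_rpow_of_neg hx hxy (by linarith)) hp

lemma intervalIntegrable_mul_of_monotoneOn {w g : ℝ → ℝ} {a b : ℝ} (hab : a ≤ b)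
    (hw : IntervalIntegrable w volume a b) (hg : MonotoneOn g (Set.Icc a b)) :
    IntervalIntegrable (fun x ↦ w x * g x) volume a b := by
  rw [intervalIntegrable_iff_integrableOn_Icc_of_le hab] at hw ⊢
  have hg_meas := (aemeasurable_restrict_of_monotoneOn (μ := volume) measurableSet_Icc
    hg).aestronglyMeasurable
  refine hw.mul_bdd (c := max |g a| |g b|) hg_meas ?_
  filter_upwards [ae_restrict_mem measurableSet_Icc] with x hx
  exact abs_le_max_abs_abs (hg (Set.left_mem_Icc.2 hab) hx hx.1)
    (hg hx (Set.right_mem_Icc.2 hab) hx.2)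

lemma integral_mul_mem_Ioo_of_strictMonoOn {w g : ℝ → ℝ} {a b : ℝ} (hab : a < b)
    (hw_pos : ∀ x ∈ Set.Ioo a b, 0 < w x) (hw_one : ∫ x in a..b, w x = 1)
    (hg : StrictMonoOn g (Set.Icc a b)) :
    ∫ x in a..b, w x * g x ∈ Set.Ioo (g a) (g b) := by
  have hw : IntervalIntegrable w volume a b :=
    intervalIntegral.intervalIntegrable_of_integral_ne_zero (hw_one.trans_ne one_ne_zero)
  have hwg := intervalIntegrable_mul_of_monotoneOn hab.le hw hg.monotoneOn
  have integral_sub_const (c : ℝ) :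
      ∫ x in a..b, (w x * g x - w x * c) = (∫ x in a..b, w x * g x) - c := by
    rw [intervalIntegral.integral_sub hwg (hw.mul_const c), intervalIntegral.integral_mul_const,
      hw_one, one_mul]
  constructor
  · rw [← sub_pos, ← integral_sub_const]
    refine intervalIntegral.intervalIntegral_pos_of_pos_on (hwg.sub (hw.mul_const _)) ?_ hab
    intro x hx
    have hgx : g a < g x := hg (Set.left_mem_Icc.2 hab.le) (Set.Ioo_subset_Icc_self hx) hx.1
    exact sub_pos.2 (mul_lt_mul_of_pos_left hgx (hw_pos x hx))
  · rw [← sub_neg, ← integral_sub_const, ← neg_pos, ← intervalIntegral.integral_neg]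
    refine intervalIntegral.intervalIntegral_pos_of_pos_on (hwg.sub (hw.mul_const _)).neg ?_ hab
    intro x hx
    have hgx : g x < g b := hg (Set.Ioo_subset_Icc_self hx) (Set.right_mem_Icc.2 hab.le) hx.2
    exact neg_pos.2 (sub_neg.2 (mul_lt_mul_of_pos_left hgx (hw_pos x hx)))

/-- The drop of the kernel `r ↦ (r - s) ^ (-α)`, with source time `s`, between the evaluation
times `A` and `B`. -/
noncomputable def kernelDrop (α A B s : ℝ) : ℝ := (A - s) ^ (-α) - (B - s) ^ (-α)

lemma strictMonoOn_kernelDrop {α A B : ℝ} (hα : 0 < α) (hAB : A < B) :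
    StrictMonoOn (kernelDrop α A B) (Set.Iio A) := by
  intro s hs s' hs' hss'
  rw [Set.mem_Iio] at hs hs'
  have h := increment_lt_of_strictConvexOn (strictConvexOn_rpow_of_neg (neg_neg_of_pos hα))
    (x := A - s') (y := A - s) (h := B - A) (by simpa using hs')
    (by rw [Set.mem_Ioi]; linarith) (by linarith) (by linarith)
  simp only [sub_add_sub_cancel'] at h
  unfold kernelDrop
  linarith

section Mesh

variable {α : ℝ} {t : ℕ → ℝ} {j k l : ℕ}

lemma tau_pos (ht : StrictMono t) (hj : 1 ≤ j) : 0 < tau t j :=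
  sub_pos.2 (ht (by omega))

lemma lt_tstar (hα : α < 2) (ht : StrictMono t) (hjk : j < k) : t j < tstar α t k := by
  have hj : t j ≤ t (k - 1) := ht.monotone (by omega)
  have hoff : 0 < (1 - α / 2) * tau t k := mul_pos (by linarith) (tau_pos ht (by omega))
  unfold tstar
  linarith

lemma tstar_le (hα : 0 ≤ α) (ht : Monotone t) (k : ℕ) : tstar α t k ≤ t k := by
  have htau : 0 ≤ tau t k := sub_nonneg.2 (ht (Nat.sub_le k 1))
  have hoff : 0 ≤ α / 2 * tau t k := by positivity
  calc tstar α t k = t k - α / 2 * tau t k := by unfold tstar tau; ring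
    _ ≤ t k := sub_le_self _ hoff

lemma tstar_strictMono (hα : α ∈ Set.Ico 0 2) (ht : StrictMono t) : StrictMono (tstar α t) :=
  fun k _ hkl ↦ (tstar_le hα.1 ht.monotone k).trans_lt (lt_tstar hα.2 ht hkl)

lemma sub_one_add_tau (t : ℕ → ℝ) (j : ℕ) : t (j - 1) + tau t j = t j :=
  add_sub_cancel _ _

lemma sub_one_add_mul_tau_le (ht : Monotone t) (j : ℕ) {θ : ℝ} (hθ : θ ≤ 1) :
    t (j - 1) + θ * tau t j ≤ t j := by
  have htau : 0 ≤ tau t j := sub_nonneg.2 (ht (Nat.sub_le j 1))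
  calc t (j - 1) + θ * tau t j ≤ t (j - 1) + tau t j := by
        gcongr; exact mul_le_of_le_one_left htau hθ
    _ = t j := sub_one_add_tau t j

/-- The density on `[0, 1]`, in the local variable `θ` of the `j`-th mesh interval, against which
`-a_j^k` averages the kernel. -/
noncomputable def acoefWeight (t : ℕ → ℝ) (j : ℕ) (θ : ℝ) : ℝ :=
  (2 * tau t j * (1 - θ) + tau t (j + 1)) / (tau t j + tau t (j + 1))

lemma continuous_acoefWeight (t : ℕ → ℝ) (j : ℕ) : Continuous (acoefWeight t j) := by
  unfold acoefWeight
  fun_prop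

lemma acoefWeight_pos (ht : StrictMono t) (hj : 1 ≤ j) {θ : ℝ} (hθ : θ ≤ 1) :
    0 < acoefWeight t j θ := by
  have hτj := tau_pos ht hj
  have hτj' := tau_pos ht (j := j + 1) (by omega)
  have : 0 ≤ 1 - θ := sub_nonneg.2 hθ
  unfold acoefWeight
  positivity

lemma integral_acoefWeight (h : tau t j + tau t (j + 1) ≠ 0) :
    ∫ θ in (0 : ℝ)..1, acoefWeight t j θ = 1 := by
  have hsplit (θ : ℝ) : acoefWeight t j θ =
      (2 * tau t j + tau t (j + 1) - 2 * tau t j * θ) / (tau t j + tau t (j + 1)) := by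
    unfold acoefWeight; ring
  simp only [hsplit]
  rw [intervalIntegral.integral_div, intervalIntegral.integral_sub
      intervalIntegrable_const (Continuous.intervalIntegrable (by fun_prop) _ _),
    intervalIntegral.integral_const, intervalIntegral.integral_const_mul, integral_id, smul_eq_mul]
  field_simp
  ring

lemma acoef_eq_neg_integral (ht : Monotone t) (hjk : t j ≤ tstar α t k) :
    acoef α t j k =
      -∫ θ in (0 : ℝ)..1, acoefWeight t j θ * (tstar α t k - (t (j - 1) + θ * tau t j)) ^ (-α) := by
  rw [acoef, ← intervalIntegral.integral_neg]
  refine intervalIntegral.integral_congr fun θ hθ ↦ ?_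
  rw [Set.uIcc_of_le zero_le_one] at hθ
  have hbase : 0 ≤ tstar α t k - (t (j - 1) + θ * tau t j) :=
    sub_nonneg.2 ((sub_one_add_mul_tau_le ht j hθ.2).trans hjk)
  simp only [acoefWeight, Real.rpow_neg hbase]
  rw [← div_eq_mul_inv, div_div, ← neg_div]
  ring

lemma intervalIntegrable_acoefWeight_mul_rpow (ht : Monotone t) (hjk : t j < tstar α t k) :
    IntervalIntegrable
      (fun θ ↦ acoefWeight t j θ * (tstar α t k - (t (j - 1) + θ * tau t j)) ^ (-α))
      volume 0 1 := by
  refine ContinuousOn.intervalIntegrable_of_Icc zero_le_one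
    ((continuous_acoefWeight t j).continuousOn.mul (.rpow_const (by fun_prop) fun θ hθ ↦ ?_))
  exact Or.inl (sub_pos.2 ((sub_one_add_mul_tau_le ht j hθ.2).trans_lt hjk)).ne'

lemma acoef_sub_acoef (ht : Monotone t) (hjk : t j < tstar α t k) (hjl : t j < tstar α t l) :
    acoef α t j l - acoef α t j k = ∫ θ in (0 : ℝ)..1,
      acoefWeight t j θ * kernelDrop α (tstar α t k) (tstar α t l) (t (j - 1) + θ * tau t j) := by
  simp only [kernelDrop, mul_sub]
  rw [acoef_eq_neg_integral ht hjk.le, acoef_eq_neg_integral ht hjl.le,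
    intervalIntegral.integral_sub (intervalIntegrable_acoefWeight_mul_rpow ht hjk)
      (intervalIntegrable_acoefWeight_mul_rpow ht hjl)]
  ring

lemma acoef_sub_acoef_mem_Ioo (hα : α ∈ Set.Ioo 0 2) (ht : StrictMono t) (hj : 1 ≤ j)
    (hjk : j < k) (hkl : k < l) :
    acoef α t j l - acoef α t j k ∈
      Set.Ioo (kernelDrop α (tstar α t k) (tstar α t l) (t (j - 1)))
        (kernelDrop α (tstar α t k) (tstar α t l) (t j)) := by
  have hτj := tau_pos ht hj
  have hτj' := tau_pos ht (j := j + 1) (by omega)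
  have hk : t j < tstar α t k := lt_tstar hα.2 ht hjk
  have hstar : tstar α t k < tstar α t l := tstar_strictMono (Set.Ioo_subset_Ico_self hα) ht hkl
  have hdrop : StrictMonoOn
      (fun θ ↦ kernelDrop α (tstar α t k) (tstar α t l) (t (j - 1) + θ * tau t j))
      (Set.Icc 0 1) := by
    refine (strictMonoOn_kernelDrop hα.1 hstar).comp (fun θ _ θ' _ hθ ↦ ?_) fun θ hθ ↦ ?_
    · gcongr
    · exact (sub_one_add_mul_tau_le ht.monotone j hθ.2).trans_lt hk
  have hmem := integral_mul_mem_Ioo_of_strictMonoOn zero_lt_one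
    (fun θ hθ ↦ acoefWeight_pos ht hj hθ.2.le) (integral_acoefWeight (by positivity)) hdrop
  rw [← acoef_sub_acoef ht.monotone hk (hk.trans hstar)] at hmem
  simpa only [zero_mul, add_zero, one_mul, sub_one_add_tau] using hmem

end Mesh

theorem acoef_second_diff_general {α : ℝ} (hα : α ∈ Set.Ioo (0 : ℝ) 2) {t : ℕ → ℝ}
    (ht : StrictMono t) {j k l : ℕ} (hj : 1 ≤ j) (hjk : j + 1 < k) (hkl : k < l) :
    acoef α t (j + 1) k - acoef α t j k < acoef α t (j + 1) l - acoef α t j l := by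
  have hleft := (acoef_sub_acoef_mem_Ioo hα ht hj (by omega) hkl).2
  have hright := (acoef_sub_acoef_mem_Ioo hα ht (by omega : 1 ≤ j + 1) hjk hkl).1
  rw [Nat.add_sub_cancel] at hright
  linarith

/-- (P4): `a_{j+1}^k - a_j^k < a_{j+1}^{k+1} - a_j^{k+1}` for `k ≥ 3`, `1 ≤ j ≤ k-2`. -/
theorem acoef_second_diff (α : ℝ) (hα : α ∈ Set.Ioo (0:ℝ) 1)
    (t : ℕ → ℝ) (ht0 : t 0 = 0) (hmono : StrictMono t)
    (k j : ℕ) (hk : 3 ≤ k) (hj1 : 1 ≤ j) (hj2 : j ≤ k - 2) :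
    acoef α t (j + 1) k - acoef α t j k
      < acoef α t (j + 1) (k + 1) - acoef α t j (k + 1) := by
  exact acoef_second_diff_general ⟨hα.1, hα.2.trans one_lt_two⟩ hmono hj1 (by omega) k.lt_succ_self
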